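/- Fix (q₁, …, qₙ, t) and write n = m + k. For ν = 1, …, k let φ_ν(q₁, …, qₙ, q̇₁, …, q̇ₙ, t) be positively homogeneous of (possibly different) degrees σ_ν in the velocities (q̇₁, …, q̇ₙ) ∈ D, where D ⊆ ℝ^n is a cone. Suppose the constraints are made explicit on a cone U ⊆ ℝ^m by functions α_ν(q₁, …, qₙ, q̇₁, …, q̇_m, t): for each (q̇₁, …, q̇_m) ∈ U, the vector (α₁, …, α_k) is the unique η ∈ ℝ^k with ((q̇₁, …, q̇_m), η) ∈ D and φ_ν(q, (q̇₁, …, q̇_m, η), t) = 0 for all ν. Then each α_ν is positively homogeneous of degree 1 in (q̇₁, …, q̇_m); consequently, at every point where α_ν is differentiable in the velocities, the condition ᾱ_ν = α_ν holds, where ᾱ_ν := Σ_{r=1}^m (∂α_ν/∂q̇_r) q̇_r. -/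

import Mathlib

open scoped BigOperators

/-!
Scaling a solution `(u, α u)` of the constraints by `c > 0` stays inside `D`, and homogeneity,
whatever the degrees, keeps the constraints satisfied; so `(c • u, c • α u)` is a solution over
`c • u`, and uniqueness forces `α (c • u) = c • α u`. The Euler condition is the derivative of this
identity in `c` at `c = 1`.
-/

/-- A cone in the weak sense used for domains of positively homogeneous functions: a set stable
under scaling by positive reals, possibly not convex and possibly without `0`. -/
def IsPosCone {E : Type*} [SMul ℝ E] (s : Set E) : Prop :=
  ∀ x ∈ s, ∀ c : ℝ, 0 < c → c • x ∈ s

/-- Positive homogeneity of real degree `σ` on a set `s`, for vector-valued functions. The set is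
usually a cone, but this is not part of the definition. -/
def PosHomogeneousOn {E F : Type*} [SMul ℝ E] [SMul ℝ F] (f : E → F) (σ : ℝ) (s : Set E) : Prop :=
  ∀ x ∈ s, ∀ c : ℝ, 0 < c → f (c • x) = c ^ σ • f x

theorem IsPosCone.setOf_forall_eq_zero {E G ι : Type*} [SMul ℝ E] [Zero G] [SMulZeroClass ℝ G]
    {s : Set E} {φ : ι → E → G} {σ : ι → ℝ} (hs : IsPosCone s)
    (hφ : ∀ i, PosHomogeneousOn (φ i) (σ i) s) :
    IsPosCone {x | x ∈ s ∧ ∀ i, φ i x = 0} := by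
  rintro x ⟨hxs, hx⟩ c hc
  exact ⟨hs x hxs c hc, fun i => by rw [hφ i x hxs c hc, hx i, smul_zero]⟩

theorem IsPosCone.posHomogeneousOn_one_of_unique {E F : Type*} [SMul ℝ E] [SMul ℝ F]
    {S : Set (E × F)} {U : Set E} {f : E → F} (hS : IsPosCone S) (hU : IsPosCone U)
    (hmem : ∀ u ∈ U, (u, f u) ∈ S) (huniq : ∀ u ∈ U, ∀ y, (u, y) ∈ S → y = f u) :
    PosHomogeneousOn f 1 U := by
  intro u hu c hc
  rw [Real.rpow_one]
  exact (huniq (c • u) (hU u hu c hc) (c • f u) (hS _ (hmem u hu) c hc)).symm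

namespace PosHomogeneousOn

theorem linearMap_comp {E F G : Type*} [SMul ℝ E] [AddCommMonoid F] [Module ℝ F]
    [AddCommMonoid G] [Module ℝ G] {f : E → F} {σ : ℝ} {s : Set E}
    (hf : PosHomogeneousOn f σ s) (ℓ : F →ₗ[ℝ] G) :
    PosHomogeneousOn (fun x => ℓ (f x)) σ s :=
  fun x hx c hc => (congrArg ℓ (hf x hx c hc)).trans (ℓ.map_smul _ _)

theorem apply_self_of_hasFDerivAt {E F : Type*} [NormedAddCommGroup E] [NormedSpace ℝ E]
    [NormedAddCommGroup F] [NormedSpace ℝ F] {f : E → F} {f' : E →L[ℝ] F} {σ : ℝ} {s : Set E}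
    {x : E} (hf : PosHomogeneousOn f σ s) (hx : x ∈ s) (hf' : HasFDerivAt f f' x) :
    f' x = σ • f x := by
  have hray : HasDerivAt (fun c : ℝ => c • x) x 1 := by
    simpa using (hasDerivAt_id (1 : ℝ)).smul_const x
  have hcomp : HasDerivAt (fun c : ℝ => f (c • x)) (f' x) 1 :=
    HasFDerivAt.comp_hasDerivAt (f := fun c : ℝ => c • x) 1 (by rwa [one_smul]) hray
  have hpow : HasDerivAt (fun c : ℝ => c ^ σ • f x) (σ • f x) 1 := by
    simpa using (Real.hasDerivAt_rpow_const (p := σ) (Or.inl one_ne_zero)).smul_const (f x)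
  have heq : (fun c : ℝ => f (c • x)) =ᶠ[nhds 1] fun c => c ^ σ • f x := by
    filter_upwards [lt_mem_nhds zero_lt_one] with c hc using hf x hx c hc
  exact hcomp.unique (hpow.congr_of_eventuallyEq heq)

end PosHomogeneousOn

theorem sum_linearMap_single_one_mul {ι R : Type*} [Fintype ι] [DecidableEq ι] [CommSemiring R]
    (L : (ι → R) →ₗ[R] R) (x : ι → R) : ∑ i, L (Pi.single i 1) * x i = L x := by
  conv_rhs => rw [pi_eq_sum_univ' x, map_sum]
  simp only [map_smul, smul_eq_mul, mul_comm]

/-- The components `α_ν` become `ℓ ∘ α` for an arbitrary linear map `ℓ`: one component may be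
differentiable at a point where another is not. -/
theorem explicit_constraints_homogeneous_and_abar_eq_alpha_general {E F G H ι : Type*}
    [NormedAddCommGroup E] [NormedSpace ℝ E] [AddCommMonoid F] [Module ℝ F]
    [Zero G] [SMulZeroClass ℝ G] [NormedAddCommGroup H] [NormedSpace ℝ H]
    {D : Set (E × F)} (hD : IsPosCone D) {φ : ι → E × F → G} {σ : ι → ℝ}
    (hφ : ∀ i, PosHomogeneousOn (φ i) (σ i) D) {U : Set E} (hU : IsPosCone U) {α : E → F}
    (hmem : ∀ u ∈ U, (u, α u) ∈ D) (hzero : ∀ u ∈ U, ∀ i, φ i (u, α u) = 0)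
    (huniq : ∀ u ∈ U, ∀ η, (u, η) ∈ D → (∀ i, φ i (u, η) = 0) → η = α u) :
    PosHomogeneousOn α 1 U ∧
      ∀ ℓ : F →ₗ[ℝ] H, ∀ u ∈ U, DifferentiableAt ℝ (fun x => ℓ (α x)) u →
        fderiv ℝ (fun x => ℓ (α x)) u u = ℓ (α u) := by
  have hα : PosHomogeneousOn α 1 U :=
    (hD.setOf_forall_eq_zero hφ).posHomogeneousOn_one_of_unique hU
      (fun u hu => ⟨hmem u hu, hzero u hu⟩) (fun u hu η hη => huniq u hu η hη.1 hη.2)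
  refine ⟨hα, fun ℓ u hu hd => ?_⟩
  simpa only [one_smul] using (hα.linearMap_comp ℓ).apply_self_of_hasFDerivAt hu hd.hasFDerivAt

/-- Fix `(q, t)` and write `n = m + k`, identifying the velocity space `ℝ^n` with
`ℝ^m × ℝ^k`.  If the constraint functions `φ_ν (q, ·, t)` are positively homogeneous of
(possibly different) degrees `σ_ν` in the velocities on a cone `D ⊆ ℝ^m × ℝ^k`, and the
constraints are made explicit on a cone `U ⊆ ℝ^m` by functions `α_ν (q, ·, t)` — i.e. for
each `u ∈ U` the vector `(α₁, …, α_k)` is the unique `η` with `(u, η) ∈ D` and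
`φ_ν (q, (u, η), t) = 0` for all `ν` — then each `α_ν` is positively homogeneous of
degree `1` in `(q̇₁, …, q̇_m)`; consequently, wherever `α_ν` is differentiable in the
velocities, the Euler condition `ᾱ_ν = α_ν` holds. -/
theorem explicit_constraints_homogeneous_and_abar_eq_alpha
    {m k : ℕ} (q : Fin (m + k) → ℝ) (t : ℝ)
    {D : Set ((Fin m → ℝ) × (Fin k → ℝ))}
    (hDcone : ∀ v ∈ D, ∀ lam : ℝ, 0 < lam → lam • v ∈ D)
    (φ : Fin k → (Fin (m + k) → ℝ) → ((Fin m → ℝ) × (Fin k → ℝ)) → ℝ → ℝ)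
    (σ : Fin k → ℝ)
    (hφ : ∀ ν : Fin k, ∀ v ∈ D, ∀ lam : ℝ, 0 < lam →
        φ ν q (lam • v) t = lam ^ σ ν * φ ν q v t)
    {U : Set (Fin m → ℝ)}
    (hUcone : ∀ u ∈ U, ∀ lam : ℝ, 0 < lam → lam • u ∈ U)
    (α : Fin k → (Fin (m + k) → ℝ) → (Fin m → ℝ) → ℝ → ℝ)
    (hmem : ∀ u ∈ U, (u, fun ν => α ν q u t) ∈ D)
    (hzero : ∀ u ∈ U, ∀ ν : Fin k, φ ν q (u, fun ν' => α ν' q u t) t = 0)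
    (huniq : ∀ u ∈ U, ∀ η : Fin k → ℝ, (u, η) ∈ D →
        (∀ ν : Fin k, φ ν q (u, η) t = 0) → η = fun ν => α ν q u t) :
    (∀ ν : Fin k, ∀ u ∈ U, ∀ lam : ℝ, 0 < lam →
        α ν q (lam • u) t = lam * α ν q u t)
    ∧
    (∀ ν : Fin k, ∀ u ∈ U, DifferentiableAt ℝ (fun u' => α ν q u' t) u →
        ∑ r, fderiv ℝ (fun u' => α ν q u' t) u (Pi.single r 1) * u r = α ν q u t) := by
  obtain ⟨hom, euler⟩ := explicit_constraints_homogeneous_and_abar_eq_alpha_general (H := ℝ)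
    (φ := fun ν v => φ ν q v t) (α := fun u ν => α ν q u t) hDcone hφ hUcone hmem hzero huniq
  exact ⟨fun ν u hu c hc => by simpa using congrFun (hom u hu c hc) ν, fun ν u hu hd =>
    (sum_linearMap_single_one_mul (fderiv ℝ _ u).toLinearMap u).trans
      (euler (LinearMap.proj ν) u hu hd)⟩
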